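/- Let V be a regular potential, let ψ be the solution of the gradient flow dψ_t = -V'(ψ_t)dt with ψ_0 = x₀ ∈ ℝ \ {0}, let Φ be the fundamental solution of dΦ_t = -V''(ψ_t)Φ_t dt with Φ_0 = 1, and let y₀ ∈ ℝ \ {0}. Fix ε > 0. Then the total variation distance ‖N(Φ_t y₀, ε Φ_t² ∫₀ᵗ (1/Φ_s)² ds) − N(0, ε/(2V''(0)))‖ converges to 0 as t → +∞. (Equivalently, the linearized diffusion y^ε_t, whose law at time t is the Gaussian N(Φ_t y₀, ε Φ_t² ∫₀ᵗ (1/Φ_s)² ds), converges in distribution as t → ∞ to a centered Gaussian with variance ε/(2V''(0)).) -/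

import Mathlib

open Filter MeasureTheory ProbabilityTheory

/-- Total variation distance between two measures on `ℝ`:
`sup_A |P(A) - Q(A)|` over measurable sets `A`. -/
noncomputable def tvDist (P Q : Measure ℝ) : ℝ :=
  ⨆ A : {s : Set ℝ // MeasurableSet s}, |(P A.1).toReal - (Q A.1).toReal|

/-!
A solution of a linear equation `u' = -a u` decays exponentially once `a` is bounded below by a
positive constant. Writing `V' x = x * g x` with `g` continuous and positive, the flow `ψ` solves
such an equation with `a = g ∘ ψ`, so `ψ → 0`; hence the coefficient `V'' ∘ ψ` of the equation for
`Φ` tends to `V''(0) > 0`, and `Φ → 0` as well. Since `(Φ⁻²)' = 2 V''(ψ) Φ⁻²`, L'Hôpital's rule for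
`∞ / ∞` applied to `(∫₀ᵗ Φ⁻²) / Φ⁻²` gives the limit `1 / (2 V''(0))` of the variance at `ε = 1`.
Convergence of the mean and the variance gives pointwise convergence of the Gaussian densities,
which Scheffé's lemma upgrades to convergence in total variation.
-/

open Set
open scoped Topology NNReal

section LHopital

variable {f f' g g' : ℝ → ℝ} {L : ℝ}

theorem eventually_div_lt_of_deriv_le_mul (hf : ∀ᶠ t in atTop, HasDerivAt f (f' t) t)
    (hg : ∀ᶠ t in atTop, HasDerivAt g (g' t) t) (hg_top : Tendsto g atTop atTop)
    (hle : ∀ᶠ t in atTop, f' t ≤ L * g' t) {M : ℝ} (hLM : L < M) :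
    ∀ᶠ t in atTop, f t / g t < M := by
  obtain ⟨T, hT⟩ := eventually_atTop.1 ((hf.and hg).and hle)
  have hderiv (t : ℝ) (ht : T ≤ t) : HasDerivAt (fun t ↦ f t - L * g t) (f' t - L * g' t) t :=
    (hT t ht).1.1.sub ((hT t ht).1.2.const_mul L)
  have hanti : AntitoneOn (fun t ↦ f t - L * g t) (Ici T) :=
    antitoneOn_of_hasDerivWithinAt_nonpos (convex_Ici T)
      (fun t ht ↦ (hderiv t ht).continuousAt.continuousWithinAt)
      (fun t ht ↦ (hderiv t (interior_subset ht)).hasDerivWithinAt)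
      (fun t ht ↦ sub_nonpos.2 (hT t (interior_subset ht)).2)
  have hgap : Tendsto (fun t ↦ (M - L) * g t) atTop atTop :=
    hg_top.const_mul_atTop (sub_pos.2 hLM)
  filter_upwards [hgap.eventually_gt_atTop (f T - L * g T), hg_top.eventually_gt_atTop 0,
    eventually_ge_atTop T] with t hgap_t hg_pos hTt
  have hbound : f t - L * g t ≤ f T - L * g T := hanti self_mem_Ici hTt hTt
  rw [div_lt_iff₀ hg_pos]
  linarith

theorem tendsto_div_atTop_of_tendsto_deriv_div (hf : ∀ᶠ t in atTop, HasDerivAt f (f' t) t)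
    (hg : ∀ᶠ t in atTop, HasDerivAt g (g' t) t) (hg' : ∀ᶠ t in atTop, 0 < g' t)
    (hg_top : Tendsto g atTop atTop) (hL : Tendsto (fun t ↦ f' t / g' t) atTop (𝓝 L)) :
    Tendsto (fun t ↦ f t / g t) atTop (𝓝 L) := by
  refine tendsto_order.2 ⟨fun m hm ↦ ?_, fun M hM ↦ ?_⟩
  · obtain ⟨m', hmm', hm'L⟩ := exists_between hm
    have hle : ∀ᶠ t in atTop, -f' t ≤ -m' * g' t := by
      filter_upwards [hL.eventually_const_lt hm'L, hg'] with t hratio hpos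
      linarith [(lt_div_iff₀ hpos).1 hratio]
    filter_upwards [eventually_div_lt_of_deriv_le_mul (hf.mono fun t ht ↦ ht.fun_neg) hg hg_top hle
      (neg_lt_neg hmm')] with t ht
    rwa [neg_div, neg_lt_neg_iff] at ht
  · obtain ⟨M', hLM', hM'M⟩ := exists_between hM
    refine eventually_div_lt_of_deriv_le_mul hf hg hg_top ?_ hM'M
    filter_upwards [hL.eventually_lt_const hLM', hg'] with t hratio hpos
    exact ((div_lt_iff₀ hpos).1 hratio).le

end LHopital

theorem hasDerivAt_integral_of_continuousOn_Ici {E : Type*} [NormedAddCommGroup E]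
    [NormedSpace ℝ E] [CompleteSpace E] {f : ℝ → E} {s t : ℝ} (hf : ContinuousOn f (Ici s))
    (hst : s < t) : HasDerivAt (fun t ↦ ∫ r in s..t, f r) (f t) t :=
  intervalIntegral.integral_hasDerivAt_right
    ((hf.mono Icc_subset_Ici_self).intervalIntegrable_of_Icc hst.le)
    ((hf.mono Ioi_subset_Ici_self).stronglyMeasurableAtFilter isOpen_Ioi t hst)
    (hf.continuousAt (Ici_mem_nhds hst))

theorem tendsto_one_div_sq_atTop {ι : Type*} {F : Filter ι} {u : ι → ℝ} (hu : Tendsto u F (𝓝 0))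
    (hne : ∀ᶠ i in F, u i ≠ 0) : Tendsto (fun i ↦ (1 / u i) ^ 2) F atTop := by
  have hsq : Tendsto (fun i ↦ u i ^ 2) F (𝓝[>] 0) :=
    tendsto_nhdsWithin_iff.2 ⟨by simpa using hu.pow 2, hne.mono fun _ ↦ sq_pos_of_ne_zero⟩
  simpa only [one_div, inv_pow, Function.comp_def] using tendsto_inv_nhdsGT_zero.comp hsq

section LinearODE

variable {a u : ℝ → ℝ} {s t k l : ℝ}

theorem abs_le_abs_mul_exp_of_hasDerivAt_neg_mul (hst : s ≤ t)
    (hu : ∀ r ∈ Icc s t, HasDerivAt u (-a r * u r) r) (ha : ∀ r ∈ Icc s t, k ≤ a r) :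
    |u t| ≤ |u s| * Real.exp (-k * (t - s)) := by
  have hsq (r : ℝ) (hr : r ∈ Icc s t) :
      HasDerivAt (fun r ↦ u r ^ 2) (-(2 * a r * u r ^ 2)) r :=
    ((hu r hr).fun_pow 2).congr_deriv (by ring)
  have hgronwall : u t ^ 2 ≤ u s ^ 2 * Real.exp (-(2 * k) * (t - s)) := by
    rw [← gronwallBound_ε0]
    refine le_gronwallBound_of_liminf_deriv_right_le (f := fun r ↦ u r ^ 2) (a := s) (b := t)
      (fun r hr ↦ (hsq r hr).continuousAt.continuousWithinAt)
      (fun r hr _ ↦ (hsq r (Ico_subset_Icc_self hr)).hasDerivWithinAt.liminf_right_slope_le)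
      le_rfl (fun r hr ↦ ?_) t (right_mem_Icc.2 hst)
    linarith [mul_le_mul_of_nonneg_right (ha r (Ico_subset_Icc_self hr)) (sq_nonneg (u r))]
  refine abs_le_of_sq_le_sq (hgronwall.trans_eq ?_) (by positivity)
  rw [mul_pow, sq_abs, ← Real.exp_nat_mul]
  ring_nf

theorem tendsto_zero_of_hasDerivAt_neg_mul (hu : ∀ᶠ t in atTop, HasDerivAt u (-a t * u t) t)
    (hk : 0 < k) (ha : ∀ᶠ t in atTop, k ≤ a t) : Tendsto u atTop (𝓝 0) := by
  obtain ⟨T, hT⟩ := eventually_atTop.1 (hu.and ha)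
  have hexp : Tendsto (fun t ↦ |u T| * Real.exp (-k * (t - T))) atTop (𝓝 (|u T| * 0)) :=
    (Real.tendsto_exp_atBot.comp ((tendsto_atTop_add_const_right _ (-T)
      tendsto_id).const_mul_atTop_of_neg (neg_neg_of_pos hk))).const_mul _
  rw [mul_zero] at hexp
  refine squeeze_zero_norm' ?_ hexp
  filter_upwards [eventually_ge_atTop T] with t hTt
  exact abs_le_abs_mul_exp_of_hasDerivAt_neg_mul hTt (fun r hr ↦ (hT r hr.1).1)
    fun r hr ↦ (hT r hr.1).2

-- Backwards in time the equation is again linear, so `|u s|` is at most a multiple of `|u t|`.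
theorem ne_zero_of_hasDerivAt_neg_mul (hst : s ≤ t)
    (hu : ∀ r ∈ Icc s t, HasDerivAt u (-a r * u r) r) (ha : BddAbove (a '' Icc s t))
    (hs : u s ≠ 0) : u t ≠ 0 := by
  obtain ⟨K, hK⟩ := ha
  have hmem {r : ℝ} (hr : r ∈ Icc 0 (t - s)) : t - r ∈ Icc s t :=
    ⟨by linarith [hr.2], by linarith [hr.1]⟩
  have hreverse := abs_le_abs_mul_exp_of_hasDerivAt_neg_mul (u := fun r ↦ u (t - r))
    (a := fun r ↦ -a (t - r)) (k := -K) (sub_nonneg.2 hst)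
    (fun r hr ↦ ((hu _ (hmem hr)).comp_const_sub t r).congr_deriv (by ring))
    (fun r hr ↦ neg_le_neg (hK (mem_image_of_mem a (hmem hr))))
  intro ht
  simp only [sub_sub_cancel, sub_zero, ht, abs_zero, zero_mul] at hreverse
  exact hs (abs_nonpos_iff.1 hreverse)

theorem hasDerivAt_one_div_sq_of_hasDerivAt_neg_mul (hu : HasDerivAt u (-k * u t) t)
    (ht : u t ≠ 0) : HasDerivAt (fun t ↦ (1 / u t) ^ 2) (2 * k * (1 / u t) ^ 2) t := by
  simp only [one_div]
  refine ((hu.fun_inv ht).fun_pow 2).congr_deriv ?_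
  simp only [Nat.cast_ofNat, Nat.reduceSub, pow_one]
  field_simp

theorem tendsto_sq_mul_integral_one_div_sq (hu : ∀ t, s ≤ t → HasDerivAt u (-a t * u t) t)
    (hs : u s ≠ 0) (ha : ContinuousOn a (Ici s)) (hl : 0 < l) (hal : Tendsto a atTop (𝓝 l)) :
    Tendsto (fun t ↦ u t ^ 2 * ∫ r in s..t, (1 / u r) ^ 2) atTop (𝓝 (1 / (2 * l))) := by
  have hne (t : ℝ) (ht : s ≤ t) : u t ≠ 0 :=
    ne_zero_of_hasDerivAt_neg_mul ht (fun r hr ↦ hu r hr.1)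
      (isCompact_Icc.bddAbove_image (ha.mono Icc_subset_Ici_self)) hs
  have hcont : ContinuousOn (fun t ↦ (1 / u t) ^ 2) (Ici s) := fun t ht ↦
    ((continuousAt_const.div (hu t ht).continuousAt (hne t ht)).pow 2).continuousWithinAt
  have ha_pos : ∀ᶠ t in atTop, l / 2 < a t := hal.eventually_const_lt (half_lt_self hl)
  have hu_zero : Tendsto u atTop (𝓝 0) :=
    tendsto_zero_of_hasDerivAt_neg_mul ((eventually_ge_atTop s).mono hu) (half_pos hl)
      (ha_pos.mono fun _ ↦ le_of_lt)
  have htop : Tendsto (fun t ↦ (1 / u t) ^ 2) atTop atTop :=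
    tendsto_one_div_sq_atTop hu_zero ((eventually_ge_atTop s).mono hne)
  have hratio : Tendsto (fun t ↦ (1 / u t) ^ 2 / (2 * a t * (1 / u t) ^ 2)) atTop
      (𝓝 (1 / (2 * l))) := by
    refine (tendsto_const_nhds.div (hal.const_mul 2) (by positivity)).congr' ?_
    filter_upwards [eventually_ge_atTop s] with t ht
    have := hne t ht
    simp only [Pi.div_apply]
    field_simp
  refine (tendsto_div_atTop_of_tendsto_deriv_div
    ((eventually_gt_atTop s).mono fun t ↦ hasDerivAt_integral_of_continuousOn_Ici hcont)
    ((eventually_ge_atTop s).mono fun t ht ↦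
      hasDerivAt_one_div_sq_of_hasDerivAt_neg_mul (hu t ht) (hne t ht))
    ?_ htop hratio).congr fun t ↦ ?_
  · filter_upwards [ha_pos, eventually_ge_atTop s] with t hat ht
    have := hne t ht
    have : 0 < a t := (half_pos hl).trans hat
    positivity
  · rw [one_div, inv_pow, div_inv_eq_mul, mul_comm]

end LinearODE

section ScalarFlow

variable {b ψ : ℝ → ℝ} {c : ℝ}

theorem continuous_dslope (hb : Continuous b) (hb' : DifferentiableAt ℝ b c) :
    Continuous (dslope b c) := by
  rw [← continuousOn_univ, continuousOn_dslope univ_mem]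
  exact ⟨hb.continuousOn, hb'⟩

theorem dslope_pos_of_deriv_pos (hb : Continuous b) (hb_zero : ∀ x, b x = 0 ↔ x = c)
    (hb' : 0 < deriv b c) (x : ℝ) : 0 < dslope b c x := by
  have hne (y : ℝ) : dslope b c y ≠ 0 := by
    rcases eq_or_ne y c with rfl | hy
    · rw [dslope_same]
      exact hb'.ne'
    · rw [dslope_of_ne _ hy, slope_def_field, (hb_zero c).2 rfl, sub_zero]
      exact div_ne_zero (mt (hb_zero y).1 hy) (sub_ne_zero.2 hy)
  by_contra! hx
  obtain ⟨y, hy⟩ := mem_range_of_exists_le_of_exists_ge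
    (continuous_dslope hb (differentiableAt_of_deriv_ne_zero hb'.ne')) ⟨x, hx⟩
    ⟨c, (dslope_same b c).symm ▸ hb'.le⟩
  exact hne y hy

theorem tendsto_of_hasDerivAt_neg_comp (hb : Continuous b) (hb_zero : ∀ x, b x = 0 ↔ x = c)
    (hb' : 0 < deriv b c) (hψ : ∀ᶠ t in atTop, HasDerivAt ψ (-b (ψ t)) t) :
    Tendsto ψ atTop (𝓝 c) := by
  obtain ⟨T, hT⟩ := eventually_atTop.1 hψ
  have hpos := dslope_pos_of_deriv_pos hb hb_zero hb'
  have hlinear (t : ℝ) (ht : T ≤ t) :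
      HasDerivAt (fun t ↦ ψ t - c) (-dslope b c (ψ t) * (ψ t - c)) t := by
    have hfactor : (ψ t - c) * dslope b c (ψ t) = b (ψ t) := by
      simpa only [smul_eq_mul, (hb_zero c).2 rfl, sub_zero] using sub_smul_dslope b c (ψ t)
    exact ((hT t ht).sub_const c).congr_deriv (by rw [← hfactor]; ring)
  have hball (t : ℝ) (ht : T ≤ t) : ψ t ∈ Metric.closedBall c |ψ T - c| := by
    simpa [Real.dist_eq] using abs_le_abs_mul_exp_of_hasDerivAt_neg_mul (k := 0) ht
      (fun r hr ↦ hlinear r hr.1) fun r _ ↦ (hpos (ψ r)).le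
  obtain ⟨x, -, hx⟩ := (isCompact_closedBall c |ψ T - c|).exists_isMinOn ⟨ψ T, hball T le_rfl⟩
    (continuous_dslope hb (differentiableAt_of_deriv_ne_zero hb'.ne')).continuousOn
  exact tendsto_sub_nhds_zero_iff.1 <| tendsto_zero_of_hasDerivAt_neg_mul
    ((eventually_ge_atTop T).mono hlinear) (hpos x)
    ((eventually_ge_atTop T).mono fun t ht ↦ hx (hball t ht))

end ScalarFlow

section TotalVariation

theorem tendsto_integral_abs_sub_of_tendsto_integral {α ι : Type*} [MeasurableSpace α]
    {μ : Measure α} {F : Filter ι} [F.IsCountablyGenerated] {p : ι → α → ℝ} {q : α → ℝ}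
    (hp : ∀ i, Integrable (p i) μ) (hp_nonneg : ∀ i, 0 ≤ᵐ[μ] p i) (hq : Integrable q μ)
    (hlim : ∀ᵐ x ∂μ, Tendsto (fun i ↦ p i x) F (𝓝 (q x)))
    (hint : Tendsto (fun i ↦ ∫ x, p i x ∂μ) F (𝓝 (∫ x, q x ∂μ))) :
    Tendsto (fun i ↦ ∫ x, |p i x - q x| ∂μ) F (𝓝 0) := by
  have hpos_int (i : ι) : Integrable (fun x ↦ max (q x - p i x) 0) μ := (hq.sub (hp i)).pos_part
  have hpos : Tendsto (fun i ↦ ∫ x, max (q x - p i x) 0 ∂μ) F (𝓝 (∫ _, 0 ∂μ)) := by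
    refine tendsto_integral_filter_of_dominated_convergence (fun x ↦ |q x|)
      (.of_forall fun i ↦ (hpos_int i).aestronglyMeasurable) (.of_forall fun i ↦ ?_) hq.abs ?_
    · filter_upwards [hp_nonneg i] with x hx
      rw [Real.norm_of_nonneg (le_max_right _ _)]
      exact max_le ((sub_le_self _ hx).trans (le_abs_self _)) (abs_nonneg _)
    · filter_upwards [hlim] with x hx
      simpa using (hx.const_sub (q x)).max (tendsto_const_nhds (x := (0 : ℝ)))
  have habs (i : ι) : ∫ x, |p i x - q x| ∂μ =
      2 * ∫ x, max (q x - p i x) 0 ∂μ + (∫ x, p i x ∂μ - ∫ x, q x ∂μ) := by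
    rw [← integral_const_mul, ← integral_sub (hp i) hq,
      ← integral_add ((hpos_int i).const_mul 2) (by exact (hp i).sub hq)]
    congr with x
    rcases le_total (q x) (p i x) with h | h
    · rw [abs_of_nonneg (sub_nonneg.2 h), max_eq_right (sub_nonpos.2 h)]
      ring
    · rw [abs_of_nonpos (sub_nonpos.2 h), max_eq_left (sub_nonneg.2 h)]
      ring
  simp only [habs]
  simpa using (hpos.const_mul 2).add (hint.sub_const (∫ x, q x ∂μ))

theorem tvDist_withDensity_le_integral_abs_sub {μ : Measure ℝ} {p q : ℝ → ℝ} (hp : Integrable p μ)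
    (hp_nonneg : 0 ≤ᵐ[μ] p) (hq : Integrable q μ) (hq_nonneg : 0 ≤ᵐ[μ] q) :
    tvDist (μ.withDensity fun x ↦ ENNReal.ofReal (p x))
      (μ.withDensity fun x ↦ ENNReal.ofReal (q x)) ≤ ∫ x, |p x - q x| ∂μ := by
  have happly {f : ℝ → ℝ} (hf : Integrable f μ) (hf_nonneg : 0 ≤ᵐ[μ] f) {A : Set ℝ}
      (hA : MeasurableSet A) :
      (μ.withDensity (fun x ↦ ENNReal.ofReal (f x)) A).toReal = ∫ x in A, f x ∂μ := by
    rw [withDensity_apply _ hA, integral_eq_lintegral_of_nonneg_ae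
      (ae_restrict_of_ae hf_nonneg) hf.aestronglyMeasurable.restrict]
  refine Real.iSup_le (fun ⟨A, hA⟩ ↦ ?_) (integral_nonneg fun x ↦ abs_nonneg _)
  rw [happly hp hp_nonneg hA, happly hq hq_nonneg hA,
    ← integral_sub hp.integrableOn hq.integrableOn]
  exact abs_integral_le_integral_abs.trans
    (setIntegral_le_integral (hp.sub hq).abs (.of_forall fun x ↦ abs_nonneg _))

theorem tvDist_nonneg (P Q : Measure ℝ) : 0 ≤ tvDist P Q :=
  Real.iSup_nonneg fun _ ↦ abs_nonneg _

theorem continuousAt_gaussianPDFReal (m : ℝ) {v : ℝ≥0} (hv : v ≠ 0) (x : ℝ) :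
    ContinuousAt (fun θ : ℝ × ℝ≥0 ↦ gaussianPDFReal θ.1 θ.2 x) (m, v) := by
  have : (0 : ℝ) < v := NNReal.coe_pos.2 (pos_iff_ne_zero.2 hv)
  unfold gaussianPDFReal
  fun_prop (disch := positivity)

theorem tendsto_tvDist_gaussianReal {ι : Type*} {F : Filter ι} [F.IsCountablyGenerated]
    {m : ι → ℝ} {v : ι → ℝ≥0} {m' : ℝ} {v' : ℝ≥0} (hv' : v' ≠ 0) (hm : Tendsto m F (𝓝 m'))
    (hv : Tendsto v F (𝓝 v')) :
    Tendsto (fun i ↦ tvDist (gaussianReal (m i) (v i)) (gaussianReal m' v')) F (𝓝 0) := by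
  have hv_ne : ∀ᶠ i in F, v i ≠ 0 := hv.eventually_ne hv'
  have hL1 : Tendsto
      (fun i ↦ ∫ x, |gaussianPDFReal (m i) (v i) x - gaussianPDFReal m' v' x|) F (𝓝 0) := by
    refine tendsto_integral_abs_sub_of_tendsto_integral
      (fun i ↦ integrable_gaussianPDFReal _ _) (fun i ↦ ae_of_all _ (gaussianPDFReal_nonneg _ _))
      (integrable_gaussianPDFReal _ _)
      (ae_of_all _ fun x ↦ (continuousAt_gaussianPDFReal m' hv' x).tendsto.comp
        (hm.prodMk_nhds hv)) ?_
    refine tendsto_const_nhds.congr' (hv_ne.mono fun i hi ↦ ?_)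
    simp only [integral_gaussianPDFReal_eq_one _ hi, integral_gaussianPDFReal_eq_one _ hv']
  refine tendsto_of_tendsto_of_tendsto_of_le_of_le' tendsto_const_nhds hL1
    (.of_forall fun i ↦ tvDist_nonneg _ _) (hv_ne.mono fun i hi ↦ ?_)
  rw [gaussianReal_of_var_ne_zero _ hi, gaussianReal_of_var_ne_zero _ hv']
  exact tvDist_withDensity_le_integral_abs_sub
    (integrable_gaussianPDFReal _ _) (ae_of_all _ (gaussianPDFReal_nonneg _ _))
    (integrable_gaussianPDFReal _ _) (ae_of_all _ (gaussianPDFReal_nonneg _ _))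

end TotalVariation

theorem linearized_diffusion_tendsto_equilibrium_general {V ψ Φ : ℝ → ℝ} (hV : ContDiff ℝ 2 V)
    (hcrit : ∀ x, deriv V x = 0 ↔ x = 0) (hV''0 : 0 < deriv (deriv V) 0)
    (hψ : ∀ t, 0 ≤ t → HasDerivAt ψ (-deriv V (ψ t)) t) (hΦ0 : Φ 0 = 1)
    (hΦ : ∀ t, 0 ≤ t → HasDerivAt Φ (-deriv (deriv V) (ψ t) * Φ t) t) (y₀ : ℝ) {ε : ℝ}
    (hε : 0 < ε) :
    Tendsto
      (fun t ↦ tvDist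
        (gaussianReal (Φ t * y₀) (ε * Φ t ^ 2 * ∫ s in (0 : ℝ)..t, (1 / Φ s) ^ 2).toNNReal)
        (gaussianReal 0 (ε / (2 * deriv (deriv V) 0)).toNNReal))
      atTop (𝓝 0) := by
  have hV' : ContDiff ℝ 1 (deriv V) := hV.deriv'
  have hV'' : Continuous (deriv (deriv V)) := hV'.continuous_deriv le_rfl
  have hψ_lim : Tendsto ψ atTop (𝓝 0) :=
    tendsto_of_hasDerivAt_neg_comp hV'.continuous hcrit hV''0 ((eventually_ge_atTop 0).mono hψ)
  have hcoeff_lim : Tendsto (fun t ↦ deriv (deriv V) (ψ t)) atTop (𝓝 (deriv (deriv V) 0)) :=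
    (hV''.tendsto 0).comp hψ_lim
  have hcoeff_cont : ContinuousOn (fun t ↦ deriv (deriv V) (ψ t)) (Ici 0) :=
    hV''.comp_continuousOn fun t ht ↦ (hψ t ht).continuousAt.continuousWithinAt
  have hmean : Tendsto (fun t ↦ Φ t * y₀) atTop (𝓝 0) := by
    have hΦ_lim : Tendsto Φ atTop (𝓝 0) :=
      tendsto_zero_of_hasDerivAt_neg_mul ((eventually_ge_atTop 0).mono hΦ) (half_pos hV''0)
        ((hcoeff_lim.eventually_const_lt (half_lt_self hV''0)).mono fun _ ↦ le_of_lt)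
    simpa using hΦ_lim.mul_const y₀
  have hvar : Tendsto (fun t ↦ ε * Φ t ^ 2 * ∫ s in (0 : ℝ)..t, (1 / Φ s) ^ 2) atTop
      (𝓝 (ε / (2 * deriv (deriv V) 0))) := by
    simpa only [mul_assoc, mul_one_div] using (tendsto_sq_mul_integral_one_div_sq hΦ
      (by simp [hΦ0]) hcoeff_cont hV''0 hcoeff_lim).const_mul ε
  exact tendsto_tvDist_gaussianReal (Real.toNNReal_pos.2 (by positivity)).ne' hmean
    ((continuous_real_toNNReal.tendsto _).comp hvar)

/-- For a regular potential `V`, the law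
`N(Φ t y₀, ε Φ t² ∫₀ᵗ (1/Φ s)² ds)` of the linearized diffusion at time `t`
converges in total variation, as `t → +∞`, to `N(0, ε / (2 V''(0)))`. -/
theorem linearized_diffusion_tendsto_equilibrium
    (V ψ Φ : ℝ → ℝ) (x₀ y₀ ε : ℝ)
    (hV : ContDiff ℝ 3 V)
    (hV0 : V 0 = 0)
    (hcrit : ∀ x : ℝ, deriv V x = 0 ↔ x = 0)
    (hV''0 : 0 < deriv (deriv V) 0)
    (hcoercive : Tendsto V (Filter.cocompact ℝ) atTop)
    (hx₀ : x₀ ≠ 0)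
    (hψ0 : ψ 0 = x₀)
    (hψ : ∀ t : ℝ, 0 ≤ t → HasDerivAt ψ (-(deriv V (ψ t))) t)
    (hΦ0 : Φ 0 = 1)
    (hΦ : ∀ t : ℝ, 0 ≤ t → HasDerivAt Φ (-(deriv (deriv V) (ψ t)) * Φ t) t)
    (hy₀ : y₀ ≠ 0)
    (hε : 0 < ε) :
    Tendsto
      (fun t : ℝ =>
        tvDist
          (gaussianReal (Φ t * y₀)
            (ε * (Φ t) ^ 2 * ∫ s in (0:ℝ)..t, (1 / Φ s) ^ 2).toNNReal)
          (gaussianReal 0 (ε / (2 * deriv (deriv V) 0)).toNNReal))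
      atTop (nhds 0) := by
  exact linearized_diffusion_tendsto_equilibrium_general (hV.of_le (by norm_num)) hcrit hV''0 hψ hΦ0
    hΦ y₀ hε
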